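/- Abstract Bowen property estimate: let X be a compact metric space, f: X → X continuous, and φ: X → ℝ Hölder continuous with |φ(x) − φ(y)| ≤ K d(x,y)^β for all x,y (with K > 0, β ∈ (0,1]). Suppose C ≥ 1, θ, λ ∈ (0,1), η > 0, and 𝒢 ⊂ X × ℕ is a collection of orbit segments such that whenever (x,n) ∈ 𝒢 and max_{0≤k<n} d(f^k x, f^k y) < η, one has d(f^k x, f^k y) ≤ Cη(θ^{n−k} + λ^k) for all 0 ≤ k ≤ n. Then for every such (x,n) and y: |S_n φ(x) − S_n φ(y)| ≤ 2^{β+1} K (Cη)^β ∑_{j=0}^{∞} (max{θ, λ})^{jβ} < ∞, where S_n φ(x) = ∑_{k=0}^{n−1} φ(f^k x). -/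

import Mathlib

/-- The `n`-th Birkhoff sum of `φ` along the orbit of `x` under `f`. -/
noncomputable def birkhoff {X : Type*} (f : X → X) (φ : X → ℝ) (n : ℕ) (x : X) : ℝ :=
  ∑ k ∈ Finset.range n, φ (f^[k] x)

/-!
Bounding `a + b` by twice the larger summand gives `(a + b) ^ β ≤ 2 ^ β * (a ^ β + b ^ β)`. The
Hölder bound therefore estimates the `k`-th term of the difference of Birkhoff sums by
`2 ^ β * K * (C η) ^ β` times `r ^ ((n - k) β) + r ^ (k β)`, where `r = max θ λ`. As `k` runs from
`0` to `n - 1`, each of the two exponents takes distinct values `j β`, so each half sums to at most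
`∑ j, r ^ (j β)`.
-/

section RealPowers

variable {a b r A s t p : ℝ}

theorem add_rpow_le_two_rpow_mul_rpow_add_rpow (ha : 0 ≤ a) (hb : 0 ≤ b) (hp : 0 ≤ p) :
    (a + b) ^ p ≤ 2 ^ p * (a ^ p + b ^ p) := by
  wlog hab : a ≤ b generalizing a b
  · simpa only [add_comm] using this hb ha (le_of_not_ge hab)
  calc (a + b) ^ p ≤ (2 * b) ^ p := by gcongr; linarith
    _ = 2 ^ p * b ^ p := Real.mul_rpow zero_le_two hb
    _ ≤ 2 ^ p * (a ^ p + b ^ p) := by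
      gcongr
      exact le_add_of_nonneg_left (Real.rpow_nonneg ha p)

theorem summable_rpow_natCast_mul (hr₀ : 0 ≤ r) (hr₁ : r < 1) (hp : 0 < p) :
    Summable fun j : ℕ ↦ r ^ ((j : ℝ) * p) := by
  simp_rw [mul_comm _ p, Real.rpow_mul_natCast hr₀]
  exact summable_geometric_of_lt_one (Real.rpow_nonneg hr₀ p) (Real.rpow_lt_one hr₀ hr₁ hp)

theorem mul_pow_add_pow_rpow_le (hA : 0 ≤ A) (hs : 0 ≤ s) (ht : 0 ≤ t) (hp : 0 ≤ p)
    (i k : ℕ) :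
    (A * (s ^ i + t ^ k)) ^ p ≤
      2 ^ p * A ^ p * (max s t ^ ((i : ℝ) * p) + max s t ^ ((k : ℝ) * p)) := by
  have hr : 0 ≤ max s t := le_max_of_le_left hs
  calc (A * (s ^ i + t ^ k)) ^ p
      ≤ (A * (max s t ^ i + max s t ^ k)) ^ p := by
        gcongr
        exacts [le_max_left s t, le_max_right s t]
    _ = A ^ p * (max s t ^ i + max s t ^ k) ^ p := Real.mul_rpow hA (by positivity)
    _ ≤ A ^ p * (2 ^ p * ((max s t ^ i) ^ p + (max s t ^ k) ^ p)) := by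
        gcongr
        exact add_rpow_le_two_rpow_mul_rpow_add_rpow (by positivity) (by positivity) hp
    _ = 2 ^ p * A ^ p * (max s t ^ ((i : ℝ) * p) + max s t ^ ((k : ℝ) * p)) := by
        rw [Real.rpow_natCast_mul hr, Real.rpow_natCast_mul hr]
        ring

end RealPowers

theorem sum_range_sub_add_le_two_mul_tsum {u : ℕ → ℝ} (hu : Summable u) (hu₀ : ∀ j, 0 ≤ u j)
    (n : ℕ) : ∑ k ∈ Finset.range n, (u (n - k) + u k) ≤ 2 * ∑' j, u j := by
  have backward : ∑ k ∈ Finset.range n, u (n - k) ≤ ∑' j, u j :=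
    calc ∑ k ∈ Finset.range n, u (n - k)
        ≤ ∑ k ∈ Finset.range (n + 1), u (n - k) :=
          Finset.sum_le_sum_of_subset_of_nonneg (Finset.range_mono n.le_succ) fun _ _ _ ↦ hu₀ _
      _ = ∑ k ∈ Finset.range (n + 1), u k := Finset.sum_flip u
      _ ≤ ∑' j, u j := hu.sum_le_tsum _ fun j _ ↦ hu₀ j
  have forward : ∑ k ∈ Finset.range n, u k ≤ ∑' j, u j := hu.sum_le_tsum _ fun j _ ↦ hu₀ j
  rw [Finset.sum_add_distrib, two_mul]
  exact add_le_add backward forward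

theorem sum_rpow_le_mul_tsum_of_le_mul_pow_add_pow {d : ℕ → ℝ} {n : ℕ} {A s t p : ℝ}
    (hA : 0 ≤ A) (hs : s ∈ Set.Ico (0 : ℝ) 1) (ht : t ∈ Set.Ico (0 : ℝ) 1) (hp : 0 < p)
    (hd₀ : ∀ k < n, 0 ≤ d k) (hd : ∀ k < n, d k ≤ A * (s ^ (n - k) + t ^ k)) :
    ∑ k ∈ Finset.range n, d k ^ p ≤
      2 ^ (p + 1) * A ^ p * ∑' j : ℕ, max s t ^ ((j : ℝ) * p) := by
  set u : ℕ → ℝ := fun j ↦ max s t ^ ((j : ℝ) * p)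
  have hr : 0 ≤ max s t := le_max_of_le_left hs.1
  have hu : Summable u := summable_rpow_natCast_mul hr (max_lt hs.2 ht.2) hp
  have term_le : ∀ k < n, d k ^ p ≤ 2 ^ p * A ^ p * (u (n - k) + u k) := fun k hk ↦
    (Real.rpow_le_rpow (hd₀ k hk) (hd k hk) hp.le).trans
      (mul_pow_add_pow_rpow_le hA hs.1 ht.1 hp.le (n - k) k)
  calc ∑ k ∈ Finset.range n, d k ^ p
      ≤ ∑ k ∈ Finset.range n, 2 ^ p * A ^ p * (u (n - k) + u k) :=
        Finset.sum_le_sum fun k hk ↦ term_le k (Finset.mem_range.mp hk)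
    _ = 2 ^ p * A ^ p * ∑ k ∈ Finset.range n, (u (n - k) + u k) := by rw [Finset.mul_sum]
    _ ≤ 2 ^ p * A ^ p * (2 * ∑' j, u j) := by
        gcongr
        exact sum_range_sub_add_le_two_mul_tsum hu (fun j ↦ Real.rpow_nonneg hr _) n
    _ = 2 ^ (p + 1) * A ^ p * ∑' j, u j := by
        rw [Real.rpow_add_one two_ne_zero]
        ring

theorem abstract_bowen_estimate_general {X E : Type*} [PseudoMetricSpace X]
    [SeminormedAddCommGroup E] (f : X → X) (φ : X → E) {K β : ℝ} (hK : 0 ≤ K) (hβ : 0 < β)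
    (hφ : ∀ x y, dist (φ x) (φ y) ≤ K * dist x y ^ β)
    {A θ lam : ℝ} (hA : 0 ≤ A) (hθ : θ ∈ Set.Ico (0 : ℝ) 1) (hlam : lam ∈ Set.Ico (0 : ℝ) 1)
    {n : ℕ} {x y : X} (hxy : ∀ k < n, dist (f^[k] x) (f^[k] y) ≤ A * (θ ^ (n - k) + lam ^ k)) :
    dist (birkhoffSum f φ n x) (birkhoffSum f φ n y) ≤
      2 ^ (β + 1) * K * A ^ β * ∑' j : ℕ, max θ lam ^ ((j : ℝ) * β) :=
  calc dist (birkhoffSum f φ n x) (birkhoffSum f φ n y)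
      ≤ ∑ k ∈ Finset.range n, K * dist (f^[k] x) (f^[k] y) ^ β :=
        dist_sum_sum_le_of_le _ fun _ _ ↦ hφ _ _
    _ = K * ∑ k ∈ Finset.range n, dist (f^[k] x) (f^[k] y) ^ β := by rw [Finset.mul_sum]
    _ ≤ K * (2 ^ (β + 1) * A ^ β * ∑' j : ℕ, max θ lam ^ ((j : ℝ) * β)) := by
        gcongr
        exact sum_rpow_le_mul_tsum_of_le_mul_pow_add_pow hA hθ hlam hβ
          (fun _ _ ↦ dist_nonneg) hxy
    _ = 2 ^ (β + 1) * K * A ^ β * ∑' j : ℕ, max θ lam ^ ((j : ℝ) * β) := by ring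

/-- Abstract Bowen property estimate: if `φ` is `(K,β)`-Hölder and along
orbit segments `(x,n) ∈ 𝒢`, points `η`-shadowing `x` for `n` iterates satisfy
`d(f^k x, f^k y) ≤ Cη(θ^{n-k} + λ^k)`, then the Birkhoff sums of `φ` along `(x,n)` and
along the shadowing orbit differ by at most `2^{β+1} K (Cη)^β ∑_j max(θ,λ)^{jβ}`. -/
theorem abstract_bowen_estimate {X : Type*} [MetricSpace X] [CompactSpace X]
    (f : X → X) (hf : Continuous f)
    (φ : X → ℝ) (K β : ℝ) (hK : 0 < K) (hβ : 0 < β) (hβ' : β ≤ 1)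
    (hHolder : ∀ x y : X, |φ x - φ y| ≤ K * dist x y ^ β)
    (C θ lam η : ℝ) (hC : 1 ≤ C)
    (hθ : θ ∈ Set.Ioo (0 : ℝ) 1) (hlam : lam ∈ Set.Ioo (0 : ℝ) 1) (hη : 0 < η)
    (G : Set (X × ℕ))
    (hG : ∀ x : X, ∀ n : ℕ, (x, n) ∈ G →
      ∀ y : X, (∀ k < n, dist (f^[k] x) (f^[k] y) < η) →
        ∀ k ≤ n, dist (f^[k] x) (f^[k] y) ≤ C * η * (θ ^ (n - k) + lam ^ k)) :
    ∀ x : X, ∀ n : ℕ, (x, n) ∈ G →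
      ∀ y : X, (∀ k < n, dist (f^[k] x) (f^[k] y) < η) →
        |birkhoff f φ n x - birkhoff f φ n y| ≤
          2 ^ (β + 1) * K * (C * η) ^ β * ∑' j : ℕ, (max θ lam) ^ ((j : ℝ) * β) := by
  intro x n hx y hy
  exact abstract_bowen_estimate_general f φ hK.le hβ hHolder
    (mul_nonneg (zero_le_one.trans hC) hη.le)
    (Set.Ioo_subset_Ico_self hθ) (Set.Ioo_subset_Ico_self hlam)
    fun k hk ↦ hG x n hx y hy k hk.le
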